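/- Let R be a commutative ring, k ≥ 2, and let a, b, c, x_0, …, x_k ∈ R satisfy the recurrence relations a·x_{i−1} + b·x_i + c·x_{i+1} = 0 for all 1 ≤ i ≤ k−1. Then c·(x_i·x_{i+2} − x_{i+1}²) = a·(x_{i−1}·x_{i+1} − x_i²) for all 1 ≤ i ≤ k−2, and consequently c^i·(x_i·x_{i+2} − x_{i+1}²) = a^i·(x_0·x_2 − x_1²) for all 0 ≤ i ≤ k−2. -/

import Mathlib

/-- Propagation identity for the 2×2 minors along the recurrence
`a x_{i-1} + b x_i + c x_{i+1} = 0`: in any commutative ring,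
`c (x_i x_{i+2} - x_{i+1}²) = a (x_{i-1} x_{i+1} - x_i²)` for `1 ≤ i ≤ k-2`,
and hence `c^i (x_i x_{i+2} - x_{i+1}²) = a^i (x_0 x_2 - x_1²)` for
`0 ≤ i ≤ k-2`. -/
theorem minor_propagation {R : Type*} [CommRing R] (k : ℕ) (hk : 2 ≤ k)
    (a b c : R) (x : ℕ → R)
    (hrec : ∀ i : ℕ, 1 ≤ i → i ≤ k - 1 → a * x (i - 1) + b * x i + c * x (i + 1) = 0) :
    (∀ i : ℕ, 1 ≤ i → i ≤ k - 2 →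
        c * (x i * x (i + 2) - x (i + 1) ^ 2) = a * (x (i - 1) * x (i + 1) - x i ^ 2)) ∧
    (∀ i : ℕ, i ≤ k - 2 →
        c ^ i * (x i * x (i + 2) - x (i + 1) ^ 2) = a ^ i * (x 0 * x 2 - x 1 ^ 2)) := by
  have step : ∀ i : ℕ, 1 ≤ i → i ≤ k - 2 →
      c * (x i * x (i + 2) - x (i + 1) ^ 2) = a * (x (i - 1) * x (i + 1) - x i ^ 2) := by
    intro i hi hik
    have h1 := hrec i hi (by omega)
    have h2 := hrec (i + 1) (by omega) (by omega)
    simp only [Nat.add_sub_cancel, add_assoc, Nat.reduceAdd] at h1 h2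
    -- Eliminate `b` between the relations at `i` and `i + 1`.
    linear_combination x i * h2 - x (i + 1) * h1
  refine ⟨step, fun i => ?_⟩
  induction i with
  | zero => intro _; simp
  | succ n ih =>
    intro hn
    have h1 := step (n + 1) (by omega) hn
    have h2 := ih (by omega)
    simp only [Nat.add_sub_cancel, add_assoc, Nat.reduceAdd] at h1 h2 ⊢
    linear_combination c ^ n * h1 + a * h2
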